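/- (Fefferman–Stein vector-valued maximal inequality on spaces of homogeneous type.) Let X be a metric space and μ a doubling nonnegative Borel measure on X. Let 0 < p < ∞, 0 < q < ∞ and 0 < r < min(p, q). Then there exists a constant C > 0 such that for every sequence (f_ν)_{ν∈ℕ} of measurable functions on X, ‖ ( Σ_ν (M_r f_ν)^q )^{1/q} ‖_{L^p(X,μ)} ≤ C·‖ ( Σ_ν |f_ν|^q )^{1/q} ‖_{L^p(X,μ)}. -/

import Mathlib

open MeasureTheory Metric ENNReal

/-- The Hardy–Littlewood maximal function
`M_r f(x) = sup_{B ∋ x} (μ(B)⁻¹ ∫_B |f|^r dμ)^{1/r}`, the supremum being taken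
over all open balls `B` containing `x`. -/
noncomputable def maximalFn {X : Type*} [MetricSpace X] [MeasurableSpace X]
    (μ : Measure X) (r : ℝ) (f : X → ℝ) (x : X) : ℝ≥0∞ :=
  ⨆ (z : X) (ρ : ℝ) (_ : 0 < ρ) (_ : x ∈ ball z ρ),
    ((μ (ball z ρ))⁻¹ * ∫⁻ y in ball z ρ, ENNReal.ofReal (|f y| ^ r) ∂μ) ^ (1 / r)

noncomputable def FSmax {X : Type*} [MetricSpace X] [MeasurableSpace X]
    (μ : Measure X) (g : X → ℝ≥0∞) (x : X) : ℝ≥0∞ :=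
  ⨆ (z : X) (ρ : ℝ) (_ : 0 < ρ) (_ : x ∈ ball z ρ),
    (μ (ball z ρ))⁻¹ * ∫⁻ y in ball z ρ, g y ∂μ

section FS
variable {X : Type*} [MetricSpace X] [MeasurableSpace X] {μ : Measure X}

theorem FSmax_lt_iff {g : X → ℝ≥0∞} {x : X} {a : ℝ≥0∞} :
    a < FSmax μ g x ↔ ∃ z ρ, 0 < ρ ∧ x ∈ ball z ρ ∧
      a < (μ (ball z ρ))⁻¹ * ∫⁻ y in ball z ρ, g y ∂μ := by
  simp only [FSmax, lt_iSup_iff, exists_prop]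

theorem le_FSmax (g : X → ℝ≥0∞) {x z : X} {ρ : ℝ} (hρ : 0 < ρ) (hx : x ∈ ball z ρ) :
    (μ (ball z ρ))⁻¹ * ∫⁻ y in ball z ρ, g y ∂μ ≤ FSmax μ g x :=
  le_iSup_of_le z (le_iSup_of_le ρ (le_iSup_of_le hρ (le_iSup_of_le hx le_rfl)))

theorem FSmax_le {g : X → ℝ≥0∞} {x : X} {a : ℝ≥0∞}
    (h : ∀ z ρ, 0 < ρ → x ∈ ball z ρ →
      (μ (ball z ρ))⁻¹ * ∫⁻ y in ball z ρ, g y ∂μ ≤ a) : FSmax μ g x ≤ a :=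
  iSup_le fun z => iSup_le fun ρ => iSup_le fun hρ => iSup_le fun hx => h z ρ hρ hx

theorem FSmax_isOpen (g : X → ℝ≥0∞) (a : ℝ≥0∞) : IsOpen {x | a < FSmax μ g x} := by
  rw [isOpen_iff_forall_mem_open]
  intro x hx
  obtain ⟨z, ρ, hρ, hxz, h⟩ := FSmax_lt_iff.1 hx
  exact ⟨ball z ρ, fun y hy => FSmax_lt_iff.2 ⟨z, ρ, hρ, hy, h⟩, isOpen_ball, hxz⟩

theorem FSmax_measurable [BorelSpace X] (g : X → ℝ≥0∞) : Measurable (FSmax μ g) :=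
  measurable_of_Ioi fun a => (FSmax_isOpen g a).measurableSet

theorem FS_weak [BorelSpace X] [SigmaFinite μ] {C : ℝ≥0∞}
    (hpos : ∀ (x : X) (r : ℝ), 0 < r → 0 < μ (ball x r))
    (hfin : ∀ (x : X) (r : ℝ), 0 < r → μ (ball x r) < ∞)
    (hd : ∀ (x : X) (r : ℝ), 0 < r → μ (ball x (2 * r)) ≤ C * μ (ball x r))
    (g w : X → ℝ≥0∞) {l : ℝ≥0∞} (hl0 : l ≠ 0) (hl : l ≠ ∞) :
    ∫⁻ x in {x | l < FSmax μ g x}, w x ∂μ ≤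
      C ^ 3 * l⁻¹ * ∫⁻ x, g x * FSmax μ w x ∂μ := by
  let t : ℕ → Set (X × ℝ) := fun n => {a | 0 < a.2 ∧ a.2 ≤ n ∧
    l < (μ (ball a.1 a.2))⁻¹ * ∫⁻ y in ball a.1 a.2, g y ∂μ}
  let B : X × ℝ → Set X := fun a => ball a.1 a.2
  let E : ℕ → Set X := fun n => ⋃ a ∈ t n, B a
  have hE : {x | l < FSmax μ g x} = ⋃ n, E n := by
    ext x
    simp only [Set.mem_ofPred_eq, FSmax_lt_iff, Set.mem_iUnion, E, t, B]
    constructor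
    · rintro ⟨z, ρ, hρ, hx, h⟩
      obtain ⟨n, hn⟩ := exists_nat_ge ρ
      exact ⟨n, (z, ρ), ⟨hρ, hn, h⟩, hx⟩
    · rintro ⟨n, a, ⟨hρ, hn, h⟩, hx⟩
      exact ⟨a.1, a.2, hρ, hx, h⟩
  have hmono : Monotone E := by
    intro m n hmn
    apply Set.biUnion_subset_biUnion_left
    rintro a ⟨h1, h2, h3⟩
    exact ⟨h1, h2.trans (by exact_mod_cast hmn), h3⟩
  rw [hE, setLIntegral_iUnion_of_directed _ hmono.directed_le]
  refine iSup_le fun n => ?_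
  obtain ⟨u, hut, hdis, hcov⟩ := Vitali.exists_disjoint_subfamily_covering_enlargement B (t n)
    (fun a => a.2) 2 (by norm_num) (fun a ha => ha.1.le) n (fun a ha => ha.2.1)
    (fun a ha => ⟨a.1, mem_ball_self ha.1⟩)
  have hdis' : Pairwise (Function.onFun Disjoint fun a : u => B a) := by
    intro a b hab
    exact hdis a.2 b.2 (fun h => hab (Subtype.ext h))
  have hcount : Countable u := by
    have := Measure.countable_meas_pos_of_disjoint_iUnion (μ := μ) (As := fun a : u => B a)
      (fun a => measurableSet_ball) hdis'
    have h2 : {i : u | 0 < μ (B i)} = Set.univ := by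
      ext i; simpa using hpos _ _ (hut i.2).1
    rw [h2] at this
    exact Set.countable_univ_iff.1 this
  have hsub : E n ⊆ ⋃ b : u, ball (b : X × ℝ).1 (2 * (2 * (2 * (b : X × ℝ).2))) := by
    intro x hx
    simp only [E, Set.mem_iUnion, exists_prop] at hx
    obtain ⟨a, ha, hxa⟩ := hx
    obtain ⟨b, hb, ⟨y, hya, hyb⟩, hab⟩ := hcov a ha
    refine Set.mem_iUnion.2 ⟨⟨b, hb⟩, ?_⟩
    simp only [B, mem_ball] at *
    have := (hut hb).1
    have h1 := dist_triangle x a.1 b.1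
    have h2 := dist_triangle_left a.1 b.1 y
    linarith
  have key : ∀ b : u, ∫⁻ x in ball (b : X × ℝ).1 (2 * (2 * (2 * (b : X × ℝ).2))), w x ∂μ ≤
      C ^ 3 * l⁻¹ * ∫⁻ x in B b, g x * FSmax μ w x ∂μ := by
    rintro ⟨⟨z, ρ⟩, hb⟩
    obtain ⟨hρ, -, hlt⟩ := hut hb
    simp only [B] at *
    set I := ∫⁻ x in ball z (2 * (2 * (2 * ρ))), w x ∂μ
    have hμ0 := (hpos z ρ hρ).ne'
    have hμt := (hfin z ρ hρ).ne
    have h8 : μ (ball z (2 * (2 * (2 * ρ)))) ≤ C ^ 3 * μ (ball z ρ) := by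
      calc _ ≤ C * (C * (C * μ (ball z ρ))) := by
            refine (hd _ _ (by positivity)).trans ?_
            gcongr
            refine (hd _ _ (by positivity)).trans ?_
            gcongr
            exact hd _ _ hρ
        _ = _ := by ring
    have h8pos := hpos z (2 * (2 * (2 * ρ))) (by positivity)
    have h8fin := hfin z (2 * (2 * (2 * ρ))) (by positivity)
    have hM : ∀ x ∈ ball z ρ, (μ (ball z (2 * (2 * (2 * ρ)))))⁻¹ * I ≤ FSmax μ w x := fun x hx =>
      le_FSmax w (by positivity) (ball_subset_ball (by linarith) hx)
    have h1 : (∫⁻ x in ball z ρ, g x ∂μ) * ((μ (ball z (2 * (2 * (2 * ρ)))))⁻¹ * I) ≤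
        ∫⁻ x in ball z ρ, g x * FSmax μ w x ∂μ := by
      refine (lintegral_mul_const_le _ _).trans ?_
      refine setLIntegral_mono' measurableSet_ball fun x hx => ?_
      gcongr
      exact hM x hx
    have h2 : l * μ (ball z ρ) ≤ ∫⁻ x in ball z ρ, g x ∂μ := by
      have := (ENNReal.lt_div_iff_mul_lt (Or.inl hμ0) (Or.inl hμt)).1
        (by rwa [ENNReal.div_eq_inv_mul] : l < (∫⁻ x in ball z ρ, g x ∂μ) / μ (ball z ρ))
      exact this.le
    calc I = l⁻¹ * l * ((μ (ball z (2 * (2 * (2 * ρ)))))⁻¹ *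
              (μ (ball z (2 * (2 * (2 * ρ)))))) * I := by
            rw [ENNReal.inv_mul_cancel hl0 hl, ENNReal.inv_mul_cancel h8pos.ne' h8fin.ne]; simp
      _ ≤ l⁻¹ * l * ((μ (ball z (2 * (2 * (2 * ρ)))))⁻¹ *
              (C ^ 3 * μ (ball z ρ))) * I := by gcongr
      _ = C ^ 3 * l⁻¹ * ((l * μ (ball z ρ)) * ((μ (ball z (2 * (2 * (2 * ρ)))))⁻¹ * I)) := by ring
      _ ≤ C ^ 3 * l⁻¹ * ((∫⁻ x in ball z ρ, g x ∂μ) *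
            ((μ (ball z (2 * (2 * (2 * ρ)))))⁻¹ * I)) := by gcongr
      _ ≤ _ := by gcongr
  calc ∫⁻ x in E n, w x ∂μ
      ≤ ∫⁻ x in ⋃ b : u, ball (b : X × ℝ).1 (2 * (2 * (2 * (b : X × ℝ).2))), w x ∂μ :=
        lintegral_mono_set hsub
    _ ≤ ∑' b : u, ∫⁻ x in ball (b : X × ℝ).1 (2 * (2 * (2 * (b : X × ℝ).2))), w x ∂μ :=
        lintegral_iUnion_le _ _
    _ ≤ ∑' b : u, C ^ 3 * l⁻¹ * ∫⁻ x in B b, g x * FSmax μ w x ∂μ := ENNReal.tsum_le_tsum key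
    _ = C ^ 3 * l⁻¹ * ∫⁻ x in ⋃ b : u, B b, g x * FSmax μ w x ∂μ := by
        rw [ENNReal.tsum_mul_left, lintegral_iUnion (fun b => measurableSet_ball) hdis']
    _ ≤ _ := by gcongr; exact Measure.restrict_le_self

theorem FS_dyadic_upper {q : ℝ} (hq : 0 < q) (a : ℝ≥0∞) :
    a ^ q ≤ ∑' k : ℤ, (4 * (2 : ℝ≥0∞) ^ k) ^ q * (if 2 * (2 : ℝ≥0∞) ^ k < a then 1 else 0) := by
  rcases eq_or_ne a 0 with rfl | h0
  · simp [hq]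
  rcases eq_or_ne a ∞ with rfl | ht
  · have h2 : ∀ k : ℤ, (2 : ℝ≥0∞) * 2 ^ k < ∞ := fun k =>
      ENNReal.mul_lt_top (by simp) (ENNReal.zpow_lt_top (by simp) (by simp) k)
    simp only [h2, if_true, mul_one]
    rw [ENNReal.top_rpow_of_pos hq]
    have : ∑' k : ℕ, (1 : ℝ≥0∞) ≤ ∑' k : ℤ, (4 * (2 : ℝ≥0∞) ^ k) ^ q := by
      calc ∑' k : ℕ, (1 : ℝ≥0∞) ≤ ∑' k : ℕ, (4 * (2 : ℝ≥0∞) ^ (k : ℤ)) ^ q := by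
            refine ENNReal.tsum_le_tsum fun k => ?_
            refine ENNReal.one_le_rpow ?_ hq
            rw [zpow_natCast]
            calc (1 : ℝ≥0∞) = 1 * 1 := by simp
              _ ≤ 4 * 2 ^ k := by
                gcongr
                · norm_num
                · exact one_le_pow₀ (by norm_num)
        _ ≤ _ := ENNReal.tsum_comp_le_tsum_of_injective Nat.cast_injective
            (fun k : ℤ => (4 * (2 : ℝ≥0∞) ^ k) ^ q)
    rwa [ENNReal.tsum_const_eq_top_of_ne_zero one_ne_zero] at this
  · obtain ⟨n, hn1, hn2⟩ := ENNReal.exists_mem_Ioc_zpow h0 ht (by norm_num : (1 : ℝ≥0∞) < 2)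
      (by simp)
    have e : ∀ m : ℤ, (2 : ℝ≥0∞) ^ (m + 1) = 2 * 2 ^ m := fun m => by
      rw [ENNReal.zpow_add (by simp) (by simp)]; simp [mul_comm]
    refine le_trans ?_ (ENNReal.le_tsum (n - 1))
    have e1 := e (n - 1)
    rw [sub_add_cancel] at e1
    rw [← e1, if_pos hn1, mul_one]
    gcongr
    refine hn2.trans (le_of_eq ?_)
    rw [e, e1]; ring

theorem FS_dyadic_lower {q : ℝ} (hq : 1 < q) : ∃ K : ℝ≥0∞, K ≠ ∞ ∧ ∀ a : ℝ≥0∞,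
    ∑' k : ℤ, ((2 : ℝ≥0∞) ^ k) ^ (q - 1) * (if (2 : ℝ≥0∞) ^ k < a then 1 else 0)
      ≤ K * a ^ (q - 1) := by
  have hq' : 0 < q - 1 := by linarith
  refine ⟨∑' j : ℕ, ((2 : ℝ≥0∞)⁻¹ ^ (q - 1)) ^ j, ?_, fun a => ?_⟩
  · rw [ENNReal.tsum_geometric]
    simp only [ne_eq, ENNReal.inv_eq_top, tsub_eq_zero_iff_le, not_le]
    exact ENNReal.rpow_lt_one (by simp) hq'
  rcases eq_or_ne a 0 with rfl | h0
  · simp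
  rcases eq_or_ne a ∞ with rfl | ht
  · rw [ENNReal.top_rpow_of_pos hq', ENNReal.mul_top]
    · exact le_top
    · refine (lt_of_lt_of_le ?_ (ENNReal.le_tsum 0)).ne'
      simp
  obtain ⟨n, hn1, hn2⟩ := ENNReal.exists_mem_Ioc_zpow h0 ht (by norm_num : (1 : ℝ≥0∞) < 2)
    (by simp)
  have hinj : Function.Injective (fun j : ℕ => n - (j : ℤ)) := by
    intro i j h; simpa using h
  have hsupp : Function.support (fun k : ℤ => ((2 : ℝ≥0∞) ^ k) ^ (q - 1) *
      (if (2 : ℝ≥0∞) ^ k < a then 1 else 0)) ⊆ Set.range (fun j : ℕ => n - (j : ℤ)) := by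
    intro k hk
    have hk : (2 : ℝ≥0∞) ^ k < a := by
      by_contra h
      simp [h] at hk
    have hkn : k ≤ n := by
      by_contra h
      have h1 : (2 : ℝ≥0∞) ^ (n + 1) ≤ 2 ^ k := ENNReal.zpow_le_of_le (by norm_num) (by omega)
      exact absurd (hk.trans_le (hn2.trans h1)) (lt_irrefl _)
    exact ⟨(n - k).toNat, by simp only; omega⟩
  rw [← hinj.tsum_eq hsupp, ← ENNReal.tsum_mul_right]
  refine ENNReal.tsum_le_tsum fun j => ?_
  calc _ ≤ ((2 : ℝ≥0∞) ^ (n - (j : ℤ))) ^ (q - 1) * 1 := by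
        gcongr; split_ifs <;> simp
    _ = ((2 : ℝ≥0∞)⁻¹ ^ (q - 1)) ^ j * ((2 : ℝ≥0∞) ^ n) ^ (q - 1) := by
        rw [mul_one, sub_eq_add_neg, ENNReal.zpow_add (by simp) (by simp),
          ENNReal.mul_rpow_of_nonneg _ _ hq'.le, mul_comm]
        congr 1
        rw [← ENNReal.rpow_natCast, ← ENNReal.rpow_mul, mul_comm, ENNReal.rpow_mul,
          ENNReal.rpow_natCast, ENNReal.zpow_neg, zpow_natCast, ENNReal.inv_pow]
    _ ≤ _ := by gcongr

theorem FSmax_trunc [BorelSpace X]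
    (hpos : ∀ (x : X) (r : ℝ), 0 < r → 0 < μ (ball x r))
    (hfin : ∀ (x : X) (r : ℝ), 0 < r → μ (ball x r) < ∞)
    (g : X → ℝ≥0∞) (l : ℝ≥0∞) (x : X) :
    FSmax μ g x ≤ FSmax μ (fun y => g y * (if l < g y then 1 else 0)) x + l := by
  refine FSmax_le fun z ρ hρ hx => ?_
  have h1 : ∫⁻ y in ball z ρ, g y ∂μ ≤
      (∫⁻ y in ball z ρ, g y * (if l < g y then 1 else 0) ∂μ) + l * μ (ball z ρ) := by
    rw [← setLIntegral_const, ← lintegral_add_right _ measurable_const]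
    refine lintegral_mono fun y => ?_
    by_cases h : l < g y
    · simp [h]
    · simp only [h, if_false, mul_zero, zero_add]; exact not_lt.1 h
  calc _ ≤ (μ (ball z ρ))⁻¹ * ((∫⁻ y in ball z ρ, g y * (if l < g y then 1 else 0) ∂μ) +
        l * μ (ball z ρ)) := by gcongr
    _ = (μ (ball z ρ))⁻¹ * (∫⁻ y in ball z ρ, g y * (if l < g y then 1 else 0) ∂μ) +
        l * ((μ (ball z ρ))⁻¹ * μ (ball z ρ)) := by ring
    _ ≤ _ := by
      rw [ENNReal.inv_mul_cancel (hpos z ρ hρ).ne' (hfin z ρ hρ).ne, mul_one]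
      gcongr
      exact le_FSmax _ hρ hx

theorem FS_strong [BorelSpace X] [SigmaFinite μ] {C : ℝ≥0∞} (hC : C ≠ ∞)
    (hpos : ∀ (x : X) (r : ℝ), 0 < r → 0 < μ (ball x r))
    (hfin : ∀ (x : X) (r : ℝ), 0 < r → μ (ball x r) < ∞)
    (hd : ∀ (x : X) (r : ℝ), 0 < r → μ (ball x (2 * r)) ≤ C * μ (ball x r))
    {q : ℝ} (hq : 1 < q) :
    ∃ K : ℝ≥0∞, K ≠ ∞ ∧ ∀ g w : X → ℝ≥0∞, Measurable g → Measurable w →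
      ∫⁻ x, FSmax μ g x ^ q * w x ∂μ ≤ K * ∫⁻ x, g x ^ q * FSmax μ w x ∂μ := by
  obtain ⟨K, hK, hKle⟩ := FS_dyadic_lower hq
  have hq0 : 0 < q := by linarith
  refine ⟨4 ^ q * C ^ 3 * K, ?_, fun g w hg hw => ?_⟩
  · exact ENNReal.mul_ne_top (ENNReal.mul_ne_top
      (ENNReal.rpow_ne_top_of_nonneg hq0.le (by simp)) (ENNReal.pow_ne_top hC)) hK
  have hl0 : ∀ k : ℤ, (2 : ℝ≥0∞) ^ k ≠ 0 := fun k => (ENNReal.zpow_pos (by simp) (by simp) k).ne'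
  have hlt : ∀ k : ℤ, (2 : ℝ≥0∞) ^ k ≠ ∞ := fun k => (ENNReal.zpow_lt_top (by simp) (by simp) k).ne
  have hMg := FSmax_measurable (μ := μ) g
  have hMw := FSmax_measurable (μ := μ) w
  have hind : ∀ (a : ℝ≥0∞) (F : X → ℝ≥0∞), Measurable F →
      Measurable (fun x => if a < F x then (1 : ℝ≥0∞) else 0) := fun a F hF =>
    Measurable.ite (measurableSet_lt measurable_const hF) measurable_const measurable_const
  calc ∫⁻ x, FSmax μ g x ^ q * w x ∂μ
      ≤ ∫⁻ x, ∑' k : ℤ, (4 * (2 : ℝ≥0∞) ^ k) ^ q *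
          ((if 2 * (2 : ℝ≥0∞) ^ k < FSmax μ g x then 1 else 0) * w x) ∂μ := by
        refine lintegral_mono fun x => ?_
        simp only [← mul_assoc]
        rw [ENNReal.tsum_mul_right]
        gcongr
        exact FS_dyadic_upper hq0 _
    _ = ∑' k : ℤ, (4 * (2 : ℝ≥0∞) ^ k) ^ q *
          ∫⁻ x, ((if 2 * (2 : ℝ≥0∞) ^ k < FSmax μ g x then 1 else 0) * w x) ∂μ := by
        rw [lintegral_tsum]
        · congr 1; ext k
          rw [lintegral_const_mul _ ((hind _ _ hMg).fun_mul hw)]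
        · intro k
          exact (((hind _ _ hMg).mul hw).const_mul _).aemeasurable
    _ ≤ ∑' k : ℤ, (4 * (2 : ℝ≥0∞) ^ k) ^ q * (C ^ 3 * ((2 : ℝ≥0∞) ^ k)⁻¹ *
          ∫⁻ x, g x * (if (2 : ℝ≥0∞) ^ k < g x then 1 else 0) * FSmax μ w x ∂μ) := by
        refine ENNReal.tsum_le_tsum fun k => ?_
        gcongr
        refine le_trans ?_ (FS_weak hpos hfin hd _ w (hl0 k) (hlt k))
        rw [← lintegral_indicator (FSmax_isOpen _ _).measurableSet]
        refine lintegral_mono fun x => ?_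
        by_cases h : 2 * (2 : ℝ≥0∞) ^ k < FSmax μ g x
        · have h2 : (2 : ℝ≥0∞) ^ k <
              FSmax μ (fun y => g y * (if (2 : ℝ≥0∞) ^ k < g y then 1 else 0)) x := by
            have := h.trans_le (FSmax_trunc hpos hfin g ((2 : ℝ≥0∞) ^ k) x)
            rw [two_mul] at this
            exact lt_of_add_lt_add_right this
          rw [Set.indicator_of_mem (by exact h2)]
          simp [h]
        · simp [h]
    _ = ∑' k : ℤ, ∫⁻ x, 4 ^ q * C ^ 3 * (g x * (((2 : ℝ≥0∞) ^ k) ^ (q - 1) *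
          (if (2 : ℝ≥0∞) ^ k < g x then 1 else 0)) * FSmax μ w x) ∂μ := by
        congr 1; ext k
        have e : ((2 : ℝ≥0∞) ^ k) ^ q * ((2 : ℝ≥0∞) ^ k)⁻¹ = ((2 : ℝ≥0∞) ^ k) ^ (q - 1) := by
          rw [ENNReal.rpow_sub _ _ (hl0 k) (hlt k), ENNReal.rpow_one, div_eq_mul_inv]
        rw [ENNReal.mul_rpow_of_nonneg _ _ hq0.le]
        rw [show ∀ a b c d e : ℝ≥0∞, a * b * (c * d * e) = a * c * (b * d) * e by intros; ring, e,
          ← lintegral_const_mul _ ((hg.fun_mul (hind _ _ hg)).fun_mul hMw)]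
        refine lintegral_congr fun x => by ring
    _ = ∫⁻ x, ∑' k : ℤ, 4 ^ q * C ^ 3 * (g x * (((2 : ℝ≥0∞) ^ k) ^ (q - 1) *
          (if (2 : ℝ≥0∞) ^ k < g x then 1 else 0)) * FSmax μ w x) ∂μ := by
        rw [lintegral_tsum]
        intro k
        exact (((hg.mul ((hind _ _ hg).const_mul _)).mul hMw).const_mul _).aemeasurable
    _ ≤ ∫⁻ x, 4 ^ q * C ^ 3 * K * (g x ^ q * FSmax μ w x) ∂μ := by
        refine lintegral_mono fun x => ?_
        simp only
        rw [ENNReal.tsum_mul_left, ENNReal.tsum_mul_right, ENNReal.tsum_mul_left]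
        calc _ ≤ 4 ^ q * C ^ 3 * (g x * (K * g x ^ (q - 1)) * FSmax μ w x) := by
              gcongr; exact hKle _
          _ = 4 ^ q * C ^ 3 * K * ((g x ^ (1 : ℝ) * g x ^ (q - 1)) * FSmax μ w x) := by
              rw [ENNReal.rpow_one]; ring
          _ = _ := by
              rw [← ENNReal.rpow_add_of_nonneg _ _ (by norm_num) (by linarith)]
              congr 4; ring
    _ = _ := by
        rw [lintegral_const_mul _ ((hg.pow_const _).fun_mul hMw)]

theorem FS_Lp [BorelSpace X] [SigmaFinite μ] {C : ℝ≥0∞} (hC : C ≠ ∞)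
    (hpos : ∀ (x : X) (r : ℝ), 0 < r → 0 < μ (ball x r))
    (hfin : ∀ (x : X) (r : ℝ), 0 < r → μ (ball x r) < ∞)
    (hd : ∀ (x : X) (r : ℝ), 0 < r → μ (ball x (2 * r)) ≤ C * μ (ball x r))
    {q : ℝ} (hq : 1 < q) :
    ∃ K : ℝ≥0∞, K ≠ ∞ ∧ ∀ g : X → ℝ≥0∞, Measurable g →
      ∫⁻ x, FSmax μ g x ^ q ∂μ ≤ K * ∫⁻ x, g x ^ q ∂μ := by
  obtain ⟨K, hK, h⟩ := FS_strong hC hpos hfin hd hq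
  refine ⟨K, hK, fun g hg => ?_⟩
  have h1 := h g (fun _ => 1) hg measurable_const
  simp only [mul_one] at h1
  refine h1.trans ?_
  gcongr with x
  calc g x ^ q * FSmax μ (fun _ => 1) x ≤ g x ^ q * 1 := by
        gcongr
        refine FSmax_le fun z ρ hρ hx => ?_
        simp [ENNReal.inv_mul_cancel (hpos z ρ hρ).ne' (hfin z ρ hρ).ne]
    _ = _ := mul_one _

/-- case `p ≤ q` -/
theorem FS_case_le [BorelSpace X] [SigmaFinite μ] {C : ℝ≥0∞} (hC : C ≠ ∞)
    (hpos : ∀ (x : X) (r : ℝ), 0 < r → 0 < μ (ball x r))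
    (hfin : ∀ (x : X) (r : ℝ), 0 < r → μ (ball x r) < ∞)
    (hd : ∀ (x : X) (r : ℝ), 0 < r → μ (ball x (2 * r)) ≤ C * μ (ball x r))
    {p q : ℝ} (hp : 1 < p) (hpq : p ≤ q) :
    ∃ K : ℝ≥0∞, K ≠ ∞ ∧ ∀ g : ℕ → X → ℝ≥0∞, (∀ n, Measurable (g n)) →
      ∫⁻ x, (∑' n, FSmax μ (g n) x ^ q) ^ (p / q) ∂μ ≤
        K * ∫⁻ x, (∑' n, g n x ^ q) ^ (p / q) ∂μ := by
  obtain ⟨K, hK, hM⟩ := FS_Lp hC hpos hfin hd hp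
  have hp0 : 0 < p := by linarith
  have hq0 : 0 < q := by linarith
  refine ⟨K + 1, by simp [hK], fun g hg => ?_⟩
  by_cases hI : ∫⁻ x, (∑' n, g n x ^ q) ^ (p / q) ∂μ = ∞
  · rw [hI, ENNReal.mul_top (by simp)]; exact le_top
  set F : X → ℝ≥0∞ := fun x => (∑' n, g n x ^ q) ^ (1 / q) with hF
  have hSm : Measurable (fun x => ∑' n, g n x ^ q) :=
    Measurable.tsum fun n => (hg n).pow_const _
  have hFm : Measurable F := hSm.pow_const _
  have hFp : ∀ x, F x ^ p = (∑' n, g n x ^ q) ^ (p / q) := fun x => by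
    rw [hF, ← ENNReal.rpow_mul]; congr 1; field_simp
  have hFq : ∀ x, F x ^ q = ∑' n, g n x ^ q := fun x => by
    rw [hF, ← ENNReal.rpow_mul, one_div_mul_cancel hq0.ne', ENNReal.rpow_one]
  simp only [← hFp] at hI ⊢
  have hFtop : ∀ᵐ x ∂μ, F x ≠ ∞ := by
    filter_upwards [ae_lt_top (hFm.pow_const p) hI] with x hx h
    rw [h, ENNReal.top_rpow_of_pos hp0] at hx
    exact lt_irrefl _ hx
  have hgF : ∀ n x, g n x ≤ F x := fun n x => by
    rw [← ENNReal.rpow_le_rpow_iff hq0, hFq]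
    exact ENNReal.le_tsum n
  set a := p / q with ha
  have ha0 : 0 < a := by positivity
  have ha1 : a ≤ 1 := (div_le_one hq0).2 hpq
  let φ : ℕ → X → ℝ≥0∞ := fun n x => g n x ^ (q / p) * F x ^ (1 - q / p)
  have hφm : ∀ n, Measurable (φ n) := fun n => ((hg n).pow_const _).mul (hFm.pow_const _)
  have hφ1 : ∀ n, ∀ᵐ x ∂μ, g n x ≤ φ n x ^ a * F x ^ (1 - a) := by
    intro n
    filter_upwards [hFtop] with x hx
    rcases eq_or_ne (F x) 0 with h0 | h0
    · have : g n x = 0 := le_antisymm (h0 ▸ hgF n x) zero_le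
      rw [this]; exact zero_le
    · simp only [φ]
      rw [ENNReal.mul_rpow_of_nonneg _ _ ha0.le, ← ENNReal.rpow_mul, ← ENNReal.rpow_mul, mul_assoc,
        ← ENNReal.rpow_add _ _ h0 hx]
      have e1 : q / p * a = 1 := by rw [ha]; field_simp
      have e2 : (1 - q / p) * a + (1 - a) = 0 := by linear_combination -e1
      rw [e1, e2]; simp
  have hφ2 : ∀ᵐ x ∂μ, ∑' n, φ n x ^ p ≤ F x ^ p := by
    filter_upwards [hFtop] with x hx
    rcases eq_or_ne (F x) 0 with h0 | h0
    · have : ∀ n, g n x = 0 := fun n => le_antisymm (h0 ▸ hgF n x) zero_le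
      have hqp : 0 < q / p := by positivity
      simp [φ, this, hp0, hqp]
    · simp only [φ]
      have : ∀ n, (g n x ^ (q / p) * F x ^ (1 - q / p)) ^ p = g n x ^ q * F x ^ (p - q) := by
        intro n
        rw [ENNReal.mul_rpow_of_nonneg _ _ hp0.le, ← ENNReal.rpow_mul, ← ENNReal.rpow_mul]
        congr 2 <;> field_simp
      simp only [this]
      rw [ENNReal.tsum_mul_right, ← hFq, ← ENNReal.rpow_add _ _ h0 hx]
      simp
  have hpt : ∀ n x, FSmax μ (g n) x ≤ FSmax μ (φ n) x ^ a * FSmax μ F x ^ (1 - a) := by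
    intro n x
    refine FSmax_le fun z ρ hρ hx => ?_
    have h1 : ∫⁻ y in ball z ρ, g n y ∂μ ≤
        (∫⁻ y in ball z ρ, φ n y ∂μ) ^ a * (∫⁻ y in ball z ρ, F y ∂μ) ^ (1 - a) := by
      refine (lintegral_mono_ae (ae_restrict_of_ae (hφ1 n))).trans ?_
      exact ENNReal.lintegral_mul_norm_pow_le (hφm n).aemeasurable hFm.aemeasurable ha0.le
        (by linarith) (by ring)
    have e : (μ (ball z ρ))⁻¹ = (μ (ball z ρ))⁻¹ ^ a * (μ (ball z ρ))⁻¹ ^ (1 - a) := by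
      rw [← ENNReal.rpow_add_of_nonneg _ _ ha0.le (by linarith)]; simp
    calc _ ≤ (μ (ball z ρ))⁻¹ * ((∫⁻ y in ball z ρ, φ n y ∂μ) ^ a *
          (∫⁻ y in ball z ρ, F y ∂μ) ^ (1 - a)) := by gcongr
      _ = ((μ (ball z ρ))⁻¹ * ∫⁻ y in ball z ρ, φ n y ∂μ) ^ a *
          ((μ (ball z ρ))⁻¹ * ∫⁻ y in ball z ρ, F y ∂μ) ^ (1 - a) := by
          rw [ENNReal.mul_rpow_of_nonneg _ _ ha0.le,
            ENNReal.mul_rpow_of_nonneg _ _ (by linarith : 0 ≤ 1 - a)]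
          conv_lhs => rw [e]
          ring
      _ ≤ _ := by
          have : 0 ≤ 1 - a := by linarith
          gcongr
          · exact le_FSmax _ hρ hx
          · exact le_FSmax _ hρ hx
  have hMφ : ∀ n, Measurable (FSmax μ (φ n)) := fun n => FSmax_measurable _
  have hMF : Measurable (FSmax μ F) := FSmax_measurable _
  calc ∫⁻ x, (∑' n, FSmax μ (g n) x ^ q) ^ a ∂μ
      ≤ ∫⁻ x, (∑' n, FSmax μ (φ n) x ^ p) ^ a * (FSmax μ F x ^ p) ^ (1 - a) ∂μ := by
        refine lintegral_mono fun x => ?_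
        calc (∑' n, FSmax μ (g n) x ^ q) ^ a
            ≤ (∑' n, FSmax μ (φ n) x ^ p * FSmax μ F x ^ ((1 - a) * q)) ^ a := by
              gcongr with n
              calc FSmax μ (g n) x ^ q
                  ≤ (FSmax μ (φ n) x ^ a * FSmax μ F x ^ (1 - a)) ^ q := by
                    gcongr; exact hpt n x
                _ = _ := by
                    rw [ENNReal.mul_rpow_of_nonneg _ _ hq0.le, ← ENNReal.rpow_mul,
                      ← ENNReal.rpow_mul]
                    congr 2; rw [ha]; field_simp
          _ = _ := by
              rw [ENNReal.tsum_mul_right, ENNReal.mul_rpow_of_nonneg _ _ ha0.le,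
                ← ENNReal.rpow_mul, ← ENNReal.rpow_mul]
              congr 2; rw [ha]; field_simp
    _ ≤ (∫⁻ x, ∑' n, FSmax μ (φ n) x ^ p ∂μ) ^ a * (∫⁻ x, FSmax μ F x ^ p ∂μ) ^ (1 - a) :=
        ENNReal.lintegral_mul_norm_pow_le
          (Measurable.tsum fun n => (hMφ n).pow_const _).aemeasurable
          (hMF.pow_const _).aemeasurable ha0.le (by linarith) (by ring)
    _ ≤ (K * ∫⁻ x, F x ^ p ∂μ) ^ a * (K * ∫⁻ x, F x ^ p ∂μ) ^ (1 - a) := by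
        have : 0 ≤ 1 - a := by linarith
        gcongr
        · calc ∫⁻ x, ∑' n, FSmax μ (φ n) x ^ p ∂μ = ∑' n, ∫⁻ x, FSmax μ (φ n) x ^ p ∂μ :=
                lintegral_tsum fun n => ((hMφ n).pow_const _).aemeasurable
            _ ≤ ∑' n, K * ∫⁻ x, φ n x ^ p ∂μ := ENNReal.tsum_le_tsum fun n => hM _ (hφm n)
            _ = K * ∫⁻ x, ∑' n, φ n x ^ p ∂μ := by
                rw [ENNReal.tsum_mul_left, lintegral_tsum
                  fun n => ((hφm n).pow_const _).aemeasurable]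
            _ ≤ _ := by gcongr 1; exact lintegral_mono_ae hφ2
        · exact hM F hFm
    _ = K * ∫⁻ x, F x ^ p ∂μ := by
        rw [← ENNReal.rpow_add_of_nonneg _ _ ha0.le (by linarith)]; simp
    _ ≤ _ := by gcongr; simp

/-- case `q < p` -/
theorem FS_case_gt [BorelSpace X] [SigmaFinite μ] {C : ℝ≥0∞} (hC : C ≠ ∞)
    (hpos : ∀ (x : X) (r : ℝ), 0 < r → 0 < μ (ball x r))
    (hfin : ∀ (x : X) (r : ℝ), 0 < r → μ (ball x r) < ∞)
    (hd : ∀ (x : X) (r : ℝ), 0 < r → μ (ball x (2 * r)) ≤ C * μ (ball x r))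
    {p q : ℝ} (hq : 1 < q) (hpq : q < p) :
    ∃ K : ℝ≥0∞, K ≠ ∞ ∧ ∀ g : ℕ → X → ℝ≥0∞, (∀ n, Measurable (g n)) →
      ∫⁻ x, (∑' n, FSmax μ (g n) x ^ q) ^ (p / q) ∂μ ≤
        K * ∫⁻ x, (∑' n, g n x ^ q) ^ (p / q) ∂μ := by
  have hp0 : 0 < p := by linarith
  have hq0 : 0 < q := by linarith
  set s := p / q with hs
  have hs1 : 1 < s := (one_lt_div hq0).2 hpq
  have hs0 : 0 < s := by linarith
  set s' := s / (s - 1) with hs'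
  have hs1' : 1 < s' := (one_lt_div (by linarith)).2 (by linarith)
  have hne : s - 1 ≠ 0 := by linarith
  have hconj : 1 / s + 1 / s' = 1 := by rw [hs']; field_simp; ring
  obtain ⟨A, hA, hAle⟩ := FS_strong hC hpos hfin hd hq
  obtain ⟨A', hA', hAle'⟩ := FS_Lp hC hpos hfin hd hs1'
  obtain ⟨D, hD, hDle⟩ := FS_Lp hC hpos hfin hd (hq.trans hpq)
  refine ⟨(A * A' ^ (1 / s')) ^ s + 1, ?_, fun g hg => ?_⟩
  · refine ENNReal.add_ne_top.2 ⟨?_, by simp⟩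
    exact ENNReal.rpow_ne_top_of_nonneg hs0.le (ENNReal.mul_ne_top hA
      (ENNReal.rpow_ne_top_of_nonneg (by positivity) hA'))
  set J := ∫⁻ x, (∑' n, g n x ^ q) ^ s ∂μ with hJ
  by_cases hI : J = ∞
  · rw [hI, ENNReal.mul_top (by simp)]; exact le_top
  have hHm : Measurable (fun x => ∑' n, g n x ^ q) :=
    Measurable.tsum fun n => (hg n).pow_const _
  have hMm : ∀ n, Measurable (fun x => FSmax μ (g n) x ^ q) := fun n =>
    (FSmax_measurable _).pow_const _
  have hGm : ∀ N : ℕ, Measurable (fun x => ∑ n ∈ Finset.range N, FSmax μ (g n) x ^ q) := fun N =>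
    Finset.measurable_fun_sum _ fun n _ => hMm n
  have hgJ : ∀ n, ∫⁻ x, g n x ^ p ∂μ ≤ J := by
    intro n
    refine lintegral_mono fun x => ?_
    calc g n x ^ p = (g n x ^ q) ^ s := by rw [← ENNReal.rpow_mul]; congr 1; rw [hs]; field_simp
      _ ≤ _ := by gcongr; exact ENNReal.le_tsum n
  have hbound : ∀ N : ℕ, ∫⁻ x, (∑ n ∈ Finset.range N, FSmax μ (g n) x ^ q) ^ s ∂μ ≤
      (A * A' ^ (1 / s')) ^ s * J := by
    intro N
    set I := ∫⁻ x, (∑ n ∈ Finset.range N, FSmax μ (g n) x ^ q) ^ s ∂μ with hIdef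
    have hIfin : I ≠ ∞ := by
      refine ne_top_of_le_ne_top ?_ (lintegral_mono fun x =>
        ENNReal.rpow_sum_le_const_mul_sum_rpow (Finset.range N)
          (fun n => FSmax μ (g n) x ^ q) hs1.le)
      rw [lintegral_const_mul _ (Finset.measurable_fun_sum _ fun n _ => (hMm n).pow_const _),
        lintegral_finsetSum _ fun n _ => (hMm n).pow_const _]
      refine ENNReal.mul_ne_top (ENNReal.rpow_ne_top_of_nonneg (by linarith) (by simp)) ?_
      refine ENNReal.sum_ne_top.2 fun n _ => ?_
      have e : ∀ x, (FSmax μ (g n) x ^ q) ^ s = FSmax μ (g n) x ^ p := fun x => by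
        rw [← ENNReal.rpow_mul]; congr 1; rw [hs]; field_simp
      simp only [e]
      exact ne_top_of_le_ne_top (ENNReal.mul_ne_top hD (ne_top_of_le_ne_top hI (hgJ n)))
        (hDle _ (hg n))
    set w : X → ℝ≥0∞ := fun x => (∑ n ∈ Finset.range N, FSmax μ (g n) x ^ q) ^ (s - 1) with hw
    have hwm : Measurable w := (hGm N).pow_const _
    have hMw : Measurable (FSmax μ w) := FSmax_measurable _
    have main : I ≤ A * A' ^ (1 / s') * J ^ (1 / s) * I ^ (1 / s') := by
      calc I = ∫⁻ x, ∑ n ∈ Finset.range N, FSmax μ (g n) x ^ q * w x ∂μ := by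
            refine lintegral_congr fun x => ?_
            rw [← Finset.sum_mul, hw]
            set S := ∑ n ∈ Finset.range N, FSmax μ (g n) x ^ q
            calc S ^ s = S ^ (1 + (s - 1)) := by congr 1; ring
              _ = _ := by
                rw [ENNReal.rpow_add_of_nonneg _ _ zero_le_one (by linarith), ENNReal.rpow_one]
        _ = ∑ n ∈ Finset.range N, ∫⁻ x, FSmax μ (g n) x ^ q * w x ∂μ :=
            lintegral_finsetSum _ fun n _ => (hMm n).mul hwm
        _ ≤ ∑ n ∈ Finset.range N, A * ∫⁻ x, g n x ^ q * FSmax μ w x ∂μ :=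
            Finset.sum_le_sum fun n _ => hAle _ _ (hg n) hwm
        _ = A * ∫⁻ x, ∑ n ∈ Finset.range N, g n x ^ q * FSmax μ w x ∂μ := by
            rw [← Finset.mul_sum, lintegral_finsetSum _ fun n _ => ((hg n).pow_const _).fun_mul hMw]
        _ ≤ A * ∫⁻ x, ((∑' n, g n x ^ q) ^ s) ^ (1 / s) * (FSmax μ w x ^ s') ^ (1 / s') ∂μ := by
            gcongr with x
            rw [← Finset.sum_mul, ← ENNReal.rpow_mul, ← ENNReal.rpow_mul,
              mul_one_div_cancel hs0.ne', mul_one_div_cancel (by linarith : s' ≠ 0),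
              ENNReal.rpow_one, ENNReal.rpow_one]
            gcongr
            exact ENNReal.sum_le_tsum _
        _ ≤ A * (J ^ (1 / s) * (∫⁻ x, FSmax μ w x ^ s' ∂μ) ^ (1 / s')) := by
            gcongr
            exact ENNReal.lintegral_mul_norm_pow_le (hHm.pow_const _).aemeasurable
              (hMw.pow_const _).aemeasurable (by positivity) (by positivity) hconj
        _ ≤ A * (J ^ (1 / s) * (A' * ∫⁻ x, w x ^ s' ∂μ) ^ (1 / s')) := by
            have : 0 ≤ 1 / s' := by positivity
            gcongr
            exact hAle' w hwm
        _ = A * (J ^ (1 / s) * (A' * I) ^ (1 / s')) := by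
            congr 4
            refine lintegral_congr fun x => ?_
            rw [hw, ← ENNReal.rpow_mul]
            congr 1; rw [hs']; field_simp
        _ = _ := by
            rw [ENNReal.mul_rpow_of_nonneg _ _ (by positivity)]; ring
    rcases eq_or_ne I 0 with h0 | h0
    · rw [h0]; exact zero_le
    have hX0 : I ^ (1 / s') ≠ 0 := by
      have := ENNReal.rpow_pos (p := 1 / s') (pos_iff_ne_zero.2 h0) hIfin
      exact this.ne'
    have hXt : I ^ (1 / s') ≠ ∞ := ENNReal.rpow_ne_top_of_ne_zero h0 hIfin
    have h2 : I ^ (1 / s) ≤ A * A' ^ (1 / s') * J ^ (1 / s) := by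
      rw [← ENNReal.mul_le_mul_iff_left hX0 hXt, ← ENNReal.rpow_add _ _ h0 hIfin, hconj,
        ENNReal.rpow_one]
      exact main
    calc I = (I ^ (1 / s)) ^ s := by
          rw [← ENNReal.rpow_mul, one_div_mul_cancel hs0.ne', ENNReal.rpow_one]
      _ ≤ (A * A' ^ (1 / s') * J ^ (1 / s)) ^ s := by gcongr
      _ = _ := by
          rw [ENNReal.mul_rpow_of_nonneg _ _ hs0.le, ← ENNReal.rpow_mul J,
            one_div_mul_cancel hs0.ne', ENNReal.rpow_one]
  have hlim : ∫⁻ x, (∑' n, FSmax μ (g n) x ^ q) ^ s ∂μ =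
      ⨆ N : ℕ, ∫⁻ x, (∑ n ∈ Finset.range N, FSmax μ (g n) x ^ q) ^ s ∂μ := by
    rw [← lintegral_iSup (fun N => (hGm N).pow_const _)]
    · refine lintegral_congr fun x => ?_
      rw [ENNReal.tsum_eq_iSup_nat]
      exact (ENNReal.orderIsoRpow s hs0).map_iSup _
    · intro M N hMN x
      simp only
      gcongr
  rw [hlim]
  refine iSup_le fun N => (hbound N).trans ?_
  gcongr
  simp

end FS

theorem FS_iSup_rpow {ι : Sort*} {a : ℝ} (ha : 0 < a) (h : ι → ℝ≥0∞) :
    (⨆ i, h i) ^ a = ⨆ i, h i ^ a :=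
  (ENNReal.orderIsoRpow a ha).map_iSup h

/-- Fefferman–Stein vector-valued maximal inequality on a doubling metric measure
space: for `0 < p < ∞`, `0 < q < ∞`, `0 < r < min(p,q)`, there is `C > 0` such that
`‖(Σ_ν (M_r f_ν)^q)^{1/q}‖_{L^p} ≤ C ‖(Σ_ν |f_ν|^q)^{1/q}‖_{L^p}` for every
sequence `(f_ν)` of measurable functions. -/
theorem fefferman_stein_vector_valued
    {X : Type*} [MetricSpace X] [MeasurableSpace X] [BorelSpace X]
    (μ : Measure X) (C₀ : ℝ) (hC₀ : 1 ≤ C₀)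
    (hdouble : ∀ (x : X) (r : ℝ), 0 < r →
      μ (ball x (2 * r)) ≤ ENNReal.ofReal C₀ * μ (ball x r))
    (p q r : ℝ) (hp : 0 < p) (hq : 0 < q) (hr : 0 < r) (hrpq : r < min p q) :
    ∃ C > (0 : ℝ), ∀ f : ℕ → X → ℝ, (∀ ν, Measurable (f ν)) →
      (∫⁻ x, ((∑' ν : ℕ, (maximalFn μ r (f ν) x) ^ q) ^ (1 / q)) ^ p ∂μ) ^ (1 / p)
        ≤ ENNReal.ofReal C *
          (∫⁻ x, ((∑' ν : ℕ, ENNReal.ofReal (|f ν x| ^ q)) ^ (1 / q)) ^ p ∂μ) ^ (1 / p) := by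
  have hrp : r < p := hrpq.trans_le (min_le_left _ _)
  have hrq : r < q := hrpq.trans_le (min_le_right _ _)
  have hiter : ∀ (x : X) (r : ℝ), 0 < r → ∀ n : ℕ,
      μ (ball x (2 ^ n * r)) ≤ ENNReal.ofReal C₀ ^ n * μ (ball x r) := by
    intro x r hr n
    induction n with
    | zero => simp
    | succ n ih =>
      calc μ (ball x (2 ^ (n + 1) * r)) = μ (ball x (2 * (2 ^ n * r))) := by congr 2; ring
        _ ≤ _ := hdouble _ _ (by positivity)
        _ ≤ ENNReal.ofReal C₀ * (ENNReal.ofReal C₀ ^ n * μ (ball x r)) := by gcongr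
        _ = _ := by ring
  have hcover : ∀ (x : X) (r : ℝ), 0 < r → ⋃ n : ℕ, ball x (2 ^ n * r) = Set.univ := by
    intro x r hr
    refine Set.eq_univ_of_forall fun y => Set.mem_iUnion.2 ?_
    obtain ⟨n, hn⟩ := pow_unbounded_of_one_lt (dist y x / r) (by norm_num : (1 : ℝ) < 2)
    exact ⟨n, by rw [mem_ball]; exact (div_lt_iff₀ hr).1 hn⟩
  by_cases hpos : ∀ (x : X) (r : ℝ), 0 < r → 0 < μ (ball x r)
  swap
  · push Not at hpos
    obtain ⟨x, ρ, hρ, h0⟩ := hpos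
    have hμ : μ = 0 := by
      rw [← Measure.measure_univ_eq_zero, ← hcover x ρ hρ, measure_iUnion_null_iff]
      intro n
      have := hiter x ρ hρ n
      rw [le_antisymm h0 zero_le, mul_zero] at this
      exact le_antisymm this zero_le
    refine ⟨1, one_pos, fun f _ => ?_⟩
    subst hμ
    simp [hp]
  by_cases hfin : ∀ (x : X) (r : ℝ), 0 < r → μ (ball x r) < ∞
  swap
  · push Not at hfin
    obtain ⟨x, ρ, hρ, ht⟩ := hfin
    have hall : ∀ (z : X) (s : ℝ), 0 < s → μ (ball z s) = ∞ := by
      intro z s hs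
      obtain ⟨n, hn⟩ := pow_unbounded_of_one_lt ((ρ + dist x z) / s) (by norm_num : (1 : ℝ) < 2)
      have h1 : μ (ball x ρ) ≤ μ (ball z (2 ^ n * s)) :=
        measure_mono (ball_subset_ball' ((div_lt_iff₀ hs).1 hn).le)
      have h2 := (ht.trans h1).trans (hiter z s hs n)
      by_contra h
      exact absurd (top_le_iff.1 h2) (ENNReal.mul_ne_top (by simp) h)
    refine ⟨1, one_pos, fun f _ => ?_⟩
    have h0 : ∀ ν x, maximalFn μ r (f ν) x = 0 := by
      intro ν x
      simp only [maximalFn, ENNReal.iSup_eq_zero]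
      intro z s hs _
      rw [hall z s hs]
      simp [hr]
    simp [h0, hp, hq]
  have hsig : SigmaFinite μ := by
    rcases isEmpty_or_nonempty X with h | ⟨⟨x⟩⟩
    · have : μ = 0 := Measure.eq_zero_of_isEmpty μ
      rw [this]; infer_instance
    · refine ⟨⟨⟨fun n => ball x (2 ^ n * 1), fun _ => trivial,
        fun n => hfin _ _ (by positivity), hcover x 1 one_pos⟩⟩⟩
  have hP : 1 < p / r := (one_lt_div hr).2 hrp
  have hQ : 1 < q / r := (one_lt_div hr).2 hrq
  obtain ⟨K, hK, hFS⟩ : ∃ K : ℝ≥0∞, K ≠ ∞ ∧ ∀ g : ℕ → X → ℝ≥0∞, (∀ n, Measurable (g n)) →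
      ∫⁻ x, (∑' n, FSmax μ (g n) x ^ (q / r)) ^ ((p / r) / (q / r)) ∂μ ≤
        K * ∫⁻ x, (∑' n, g n x ^ (q / r)) ^ ((p / r) / (q / r)) ∂μ := by
    rcases le_or_gt (p / r) (q / r) with h | h
    · exact FS_case_le ENNReal.ofReal_ne_top hpos hfin hdouble hP h
    · exact FS_case_gt ENNReal.ofReal_ne_top hpos hfin hdouble hQ h
  refine ⟨(K ^ (1 / p)).toReal + 1, by positivity, fun f hf => ?_⟩
  have hmax : ∀ ν x, maximalFn μ r (f ν) x =
      FSmax μ (fun y => ENNReal.ofReal (|f ν y| ^ r)) x ^ (1 / r) := by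
    intro ν x
    have h1r : 0 < 1 / r := by positivity
    simp only [maximalFn, FSmax, FS_iSup_rpow h1r]
  have key := hFS (fun ν y => ENNReal.ofReal (|f ν y| ^ r)) fun ν =>
    ((continuous_abs.measurable.comp (hf ν)).pow_const r).ennreal_ofReal
  have e1 : ∀ ν x, maximalFn μ r (f ν) x ^ q =
      FSmax μ (fun y => ENNReal.ofReal (|f ν y| ^ r)) x ^ (q / r) := by
    intro ν x
    rw [hmax, ← ENNReal.rpow_mul]; congr 1; field_simp
  have e2 : ∀ ν x, ENNReal.ofReal (|f ν x| ^ q) =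
      ENNReal.ofReal (|f ν x| ^ r) ^ (q / r) := by
    intro ν x
    rw [ENNReal.ofReal_rpow_of_nonneg (by positivity) (by positivity),
      ← Real.rpow_mul (abs_nonneg _)]
    congr 2; field_simp
  have e3 : (p / r) / (q / r) = 1 / q * p := by field_simp
  simp only [e1, e2, ← ENNReal.rpow_mul, ← e3]
  calc _ ≤ (K * ∫⁻ x, (∑' n, ENNReal.ofReal (|f n x| ^ r) ^ (q / r)) ^
        ((p / r) / (q / r)) ∂μ) ^ (1 / p) := by gcongr
    _ ≤ _ := by
      rw [ENNReal.mul_rpow_of_nonneg _ _ (by positivity)]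
      gcongr
      rw [ENNReal.ofReal_add (by positivity) (by norm_num),
        ENNReal.ofReal_toReal (ENNReal.rpow_ne_top_of_nonneg (by positivity) hK)]
      exact le_self_add
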